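/- Let E be a real inner product space, let τ > 0, σ > 0, and let b, λ ∈ E. Then the functional q ↦ (τ/2)‖b − q‖² + τ⟨b − q, λ⟩ attains its minimum over the closed ball {q ∈ E : ‖q‖ ≤ σ} at the unique point q* := (b + λ) / max(1, ‖b + λ‖/σ); that is, the constrained q-minimization of the ADMM Lagrangian decomposes into the unconstrained solve q̃ = b + λ followed by the pointwise projection q̃ ↦ q̃ / max(1, ‖q̃‖/σ). -/

import Mathlib

open InnerProductSpace

/-!
Completing the square turns the functional into `(τ/2)‖b + l - q‖² - (τ/2)‖l‖²`, so minimizing it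
over the ball means finding the point `P` of the ball nearest to `x = b + l`. By Cauchy–Schwarz the
radial projection `P` of `x` satisfies `⟪x - P, q - P⟫ ≤ 0` for every `q` in the ball, whence
`‖x - P‖² + ‖q - P‖² ≤ ‖x - q‖²`; this gives both minimality and uniqueness.
-/

section RadialProjection

variable {E : Type*} [SeminormedAddCommGroup E] [NormedSpace ℝ E] {σ : ℝ} {x : E}

/-- The radial projection `x ↦ x / max(1, ‖x‖ / σ)` onto the closed ball of radius `σ` centred at
the origin, which in an inner product space is the nearest-point projection. It is meaningful only
for `0 < σ`: at `σ = 0` the convention `‖x‖ / 0 = 0` makes it the identity. -/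
noncomputable def radialProjection (σ : ℝ) (x : E) : E :=
  (max 1 (‖x‖ / σ))⁻¹ • x

theorem radialProjection_of_norm_le (hx : ‖x‖ ≤ σ) : radialProjection σ x = x := by
  have hratio : ‖x‖ / σ ≤ 1 := div_le_one_of_le₀ hx ((norm_nonneg x).trans hx)
  rw [radialProjection, max_eq_left hratio, inv_one, one_smul]

theorem radialProjection_of_le_norm (hσ : 0 < σ) (hx : σ ≤ ‖x‖) :
    radialProjection σ x = (σ / ‖x‖) • x := by
  have hratio : 1 ≤ ‖x‖ / σ := (one_le_div hσ).mpr hx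
  rw [radialProjection, max_eq_right hratio, inv_div]

theorem norm_radialProjection_le (hσ : 0 < σ) (x : E) : ‖radialProjection σ x‖ ≤ σ := by
  rcases le_total ‖x‖ σ with hx | hx
  · rwa [radialProjection_of_norm_le hx]
  · have hx_pos : 0 < ‖x‖ := hσ.trans_le hx
    rw [radialProjection_of_le_norm hσ hx, norm_smul, Real.norm_of_nonneg (by positivity),
      div_mul_cancel₀ σ hx_pos.ne']

end RadialProjection

section InnerProduct

variable {E : Type*} [SeminormedAddCommGroup E] [InnerProductSpace ℝ E]

theorem norm_sub_sq_add_norm_sub_sq_le_of_inner_nonpos {x p q : E}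
    (h : ⟪x - p, q - p⟫_ℝ ≤ 0) : ‖x - p‖ ^ 2 + ‖q - p‖ ^ 2 ≤ ‖x - q‖ ^ 2 := by
  have hexpand : ‖x - q‖ ^ 2 = ‖x - p‖ ^ 2 - 2 * ⟪x - p, q - p⟫_ℝ + ‖q - p‖ ^ 2 := by
    rw [← norm_sub_sq_real, sub_sub_sub_cancel_right]
  linarith

theorem inner_sub_radialProjection_nonpos {σ : ℝ} (hσ : 0 < σ) (x : E) {q : E} (hq : ‖q‖ ≤ σ) :
    ⟪x - radialProjection σ x, q - radialProjection σ x⟫_ℝ ≤ 0 := by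
  rcases le_total ‖x‖ σ with hx | hx
  · rw [radialProjection_of_norm_le hx, sub_self, inner_zero_left]
  · have hx_pos : 0 < ‖x‖ := hσ.trans_le hx
    have hshrink : 0 ≤ 1 - σ / ‖x‖ := sub_nonneg.mpr (div_le_one_of_le₀ hx hx_pos.le)
    have hinner : ⟪x, q - (σ / ‖x‖) • x⟫_ℝ ≤ 0 :=
      calc ⟪x, q - (σ / ‖x‖) • x⟫_ℝ = ⟪x, q⟫_ℝ - ‖x‖ * σ := by
            rw [inner_sub_right, real_inner_smul_right, real_inner_self_eq_norm_sq]
            field_simp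
        _ ≤ ‖x‖ * ‖q‖ - ‖x‖ * σ := by gcongr; exact real_inner_le_norm x q
        _ ≤ 0 := sub_nonpos.mpr (by gcongr)
    have hfactor : x - (σ / ‖x‖) • x = (1 - σ / ‖x‖) • x := by rw [sub_smul, one_smul]
    rw [radialProjection_of_le_norm hσ hx, hfactor, real_inner_smul_left]
    exact mul_nonpos_of_nonneg_of_nonpos hshrink hinner

theorem norm_sub_radialProjection_le {σ : ℝ} (hσ : 0 < σ) (x : E) {q : E} (hq : ‖q‖ ≤ σ) :
    ‖x - radialProjection σ x‖ ≤ ‖x - q‖ := by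
  have hpyth := norm_sub_sq_add_norm_sub_sq_le_of_inner_nonpos
    (inner_sub_radialProjection_nonpos hσ x hq)
  exact le_of_sq_le_sq (le_of_add_le_of_nonneg_left hpyth (sq_nonneg _)) (norm_nonneg _)

theorem half_mul_norm_sub_sq_add_mul_inner (τ : ℝ) (b l q : E) :
    τ / 2 * ‖b - q‖ ^ 2 + τ * ⟪b - q, l⟫_ℝ = τ / 2 * ‖b + l - q‖ ^ 2 - τ / 2 * ‖l‖ ^ 2 := by
  rw [add_sub_right_comm, norm_add_sq_real]
  ring

theorem half_mul_norm_sub_sq_add_mul_inner_le_iff {τ : ℝ} (hτ : 0 < τ) (b l p q : E) :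
    τ / 2 * ‖b - p‖ ^ 2 + τ * ⟪b - p, l⟫_ℝ ≤ τ / 2 * ‖b - q‖ ^ 2 + τ * ⟪b - q, l⟫_ℝ ↔
      ‖b + l - p‖ ≤ ‖b + l - q‖ := by
  rw [half_mul_norm_sub_sq_add_mul_inner, half_mul_norm_sub_sq_add_mul_inner,
    sub_le_sub_iff_right, mul_le_mul_iff_right₀ (half_pos hτ),
    sq_le_sq₀ (norm_nonneg _) (norm_nonneg _)]

end InnerProduct

theorem eq_radialProjection_of_norm_sub_le {E : Type*} [NormedAddCommGroup E]
    [InnerProductSpace ℝ E] {σ : ℝ} (hσ : 0 < σ) {x q : E} (hq : ‖q‖ ≤ σ)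
    (hle : ‖x - q‖ ≤ ‖x - radialProjection σ x‖) : q = radialProjection σ x := by
  have hpyth := norm_sub_sq_add_norm_sub_sq_le_of_inner_nonpos
    (inner_sub_radialProjection_nonpos hσ x hq)
  have hle_sq : ‖x - q‖ ^ 2 ≤ ‖x - radialProjection σ x‖ ^ 2 := by gcongr
  have hdist : ‖q - radialProjection σ x‖ ^ 2 = 0 := le_antisymm (by linarith) (sq_nonneg _)
  exact sub_eq_zero.mp (norm_eq_zero.mp (sq_eq_zero_iff.mp hdist))

/-- The constrained ADMM `q`-step: the functional `q ↦ (τ/2)‖b - q‖² + τ⟨b - q, λ⟩`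
attains its minimum over the ball `{‖q‖ ≤ σ}` at the unique point
`q* = (b + λ) / max(1, ‖b + λ‖/σ)`, i.e. the unconstrained solve `b + λ` followed by the
pointwise projection onto the ball. -/
theorem admm_q_step_projection
    {E : Type*} [NormedAddCommGroup E] [InnerProductSpace ℝ E]
    (τ σ : ℝ) (hτ : 0 < τ) (hσ : 0 < σ) (b l : E)
    (qstar : E) (hqstar : qstar = (max 1 (‖b + l‖ / σ))⁻¹ • (b + l)) :
    ‖qstar‖ ≤ σ ∧
      (∀ q : E, ‖q‖ ≤ σ →
        τ / 2 * ‖b - qstar‖ ^ 2 + τ * ⟪b - qstar, l⟫_ℝ ≤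
          τ / 2 * ‖b - q‖ ^ 2 + τ * ⟪b - q, l⟫_ℝ) ∧
      (∀ q : E, ‖q‖ ≤ σ →
        (∀ p : E, ‖p‖ ≤ σ →
          τ / 2 * ‖b - q‖ ^ 2 + τ * ⟪b - q, l⟫_ℝ ≤
            τ / 2 * ‖b - p‖ ^ 2 + τ * ⟪b - p, l⟫_ℝ) → q = qstar) := by
  obtain rfl : qstar = radialProjection σ (b + l) := hqstar
  simp only [half_mul_norm_sub_sq_add_mul_inner_le_iff hτ]
  have hmem : ‖radialProjection σ (b + l)‖ ≤ σ := norm_radialProjection_le hσ (b + l)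
  exact ⟨hmem, fun _ hq => norm_sub_radialProjection_le hσ (b + l) hq,
    fun _ hq hmin => eq_radialProjection_of_norm_sub_le hσ hq (hmin _ hmem)⟩
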